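/- arXiv:2401.11016 — 5 statements merged into one kernel-verified Lean document; each statement's English description precedes it below -/
import Mathlib

section
/- For all n ≥ 1 and all k with 1 ≤ k ≤ n, consideration probabilities are not identifiable in the PL+C model: there exist a utility vector u : U → ℝ and two distinct consideration-probability vectors p, p' : U → (0,1] such that the PL+C ranking distributions they induce coincide, i.e., Pr_{PL+C}(r) computed with (u, p) equals Pr_{PL+C}(r) computed with (u, p') for every length-k ranking r. -/
open scoped Classical
open Finset

noncomputable section

/-- Weight of a consideration set `C`: each item in `C` is considered (prob `p i`),
each item outside is not considered (prob `1 - p j`). -/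
def considerWeight (n : ℕ) (p : Fin n → ℝ) (C : Finset (Fin n)) : ℝ :=
  (∏ i ∈ C, p i) * ∏ j ∈ Cᶜ, (1 - p j)

/-- Normalizing constant `z_{k,p}`: total weight of consideration sets of size at least `k`. -/
def zConst (n k : ℕ) (p : Fin n → ℝ) : ℝ :=
  ∑ C ∈ Finset.univ.filter (fun C : Finset (Fin n) => k ≤ C.card), considerWeight n p C

/-- Probability of consideration set `C` (conditioned on `|C| ≥ k`). -/
def prC (n k : ℕ) (p : Fin n → ℝ) (C : Finset (Fin n)) : ℝ :=
  if k ≤ C.card then considerWeight n p C / zConst n k p else 0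

/-- Plackett–Luce probability of the length-`k` ranking `r` given consideration set `C`. -/
def prPL (n k : ℕ) (u : Fin n → ℝ) (r : Fin k ↪ Fin n) (C : Finset (Fin n)) : ℝ :=
  if ∀ t : Fin k, r t ∈ C then
    ∏ t : Fin k, Real.exp (u (r t)) /
      ∑ j ∈ C \ (Finset.Iio t).image r, Real.exp (u j)
  else 0

/-- Plackett–Luce-with-consideration (PL+C) probability of the ranking `r`. -/
def prPLC (n k : ℕ) (u p : Fin n → ℝ) (r : Fin k ↪ Fin n) : ℝ :=
  ∑ C : Finset (Fin n), prC n k p C * prPL n k u r C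

/-- PL probability of a set of rankings. -/
def prPLset (n k : ℕ) (u : Fin n → ℝ) (R : Finset (Fin k ↪ Fin n)) (C : Finset (Fin n)) : ℝ :=
  ∑ r ∈ R, prPL n k u r C

/-- PL+C probability of a set of rankings. -/
def prPLCset (n k : ℕ) (u p : Fin n → ℝ) (R : Finset (Fin k ↪ Fin n)) : ℝ :=
  ∑ r ∈ R, prPLC n k u p r

/-- `R_{i≤ℓ}`: the set of length-`k` rankings with item `i` among the top `ℓ` positions. -/
def topSet (n k : ℕ) (i : Fin n) (ℓ : ℕ) : Finset (Fin k ↪ Fin n) :=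
  Finset.univ.filter (fun r => ∃ t : Fin k, (t : ℕ) < ℓ ∧ r t = i)


lemma prPL_zero (n k : ℕ) (r : Fin k ↪ Fin n) (C : Finset (Fin n)) :
    prPL n k (fun _ => 0) r C =
      if ∀ t : Fin k, r t ∈ C then ((C.card.descFactorial k : ℕ) : ℝ)⁻¹ else 0 := by
  unfold prPL
  split_ifs with h
  · rw [Nat.descFactorial_eq_prod_range, Nat.cast_prod, ← Finset.prod_inv_distrib,
      ← Fin.prod_univ_eq_prod_range (fun i => ((C.card - i : ℕ) : ℝ)⁻¹)]
    refine Finset.prod_congr rfl fun t _ => ?_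
    have hs : (Finset.Iio t).image r ⊆ C := by
      intro x hx
      obtain ⟨s, _, rfl⟩ := Finset.mem_image.1 hx
      exact h s
    have hc : ((Finset.Iio t).image r).card = t := by
      rw [Finset.card_image_of_injective _ r.injective, Fin.card_Iio]
    simp only [Real.exp_zero, Finset.sum_const, nsmul_eq_mul, mul_one,
      Finset.card_sdiff_of_subset hs, hc, one_div]
  · rfl

lemma card_rankings (n k : ℕ) (C : Finset (Fin n)) :
    (Finset.univ.filter (fun r : Fin k ↪ Fin n => ∀ t, r t ∈ C)).card
      = C.card.descFactorial k := by
  have h : Fintype.card (Fin k ↪ C) = C.card.descFactorial k := by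
    rw [Fintype.card_embedding_eq]; simp
  rw [← h, ← Fintype.card_subtype]
  refine Fintype.card_congr
    { toFun := fun r => ⟨fun t => ⟨r.1 t, r.2 t⟩, fun a b hab => r.1.injective (by simpa using hab)⟩
      invFun := fun r => ⟨r.trans (Function.Embedding.subtype _), fun t => (r t).2⟩
      left_inv := fun r => by ext; rfl
      right_inv := fun r => by ext; rfl }

lemma sum_prPL (n k : ℕ) (C : Finset (Fin n)) (hk : k ≤ C.card) :
    ∑ r : Fin k ↪ Fin n, prPL n k (fun _ => 0) r C = 1 := by
  simp_rw [prPL_zero]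
  rw [← Finset.sum_filter, Finset.sum_const, card_rankings, nsmul_eq_mul]
  refine mul_inv_cancel₀ ?_
  have := Nat.descFactorial_pos.2 hk
  positivity

lemma weight_const (n : ℕ) (c : ℝ) (C : Finset (Fin n)) :
    considerWeight n (fun _ => c) C = c ^ C.card * (1 - c) ^ (n - C.card) := by
  simp [considerWeight, Finset.card_compl]

lemma zConst_pos (n k : ℕ) (hk : k ≤ n) (c : ℝ) (h0 : 0 < c) (h1 : c ≤ 1) :
    0 < zConst n k (fun _ => c) := by
  have h1' : 0 ≤ 1 - c := by linarith
  unfold zConst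
  refine Finset.sum_pos' (fun C _ => ?_) ⟨Finset.univ, by simpa using hk, ?_⟩
  · rw [weight_const]; positivity
  · rw [weight_const]; simp; positivity

lemma sum_prPLC (n k : ℕ) (hk : k ≤ n) (c : ℝ) (h0 : 0 < c) (h1 : c ≤ 1) :
    ∑ r : Fin k ↪ Fin n, prPLC n k (fun _ => 0) (fun _ => c) r = 1 := by
  unfold prPLC
  rw [Finset.sum_comm]
  simp_rw [← Finset.mul_sum]
  have : ∀ C : Finset (Fin n), prC n k (fun _ => c) C *
      ∑ r : Fin k ↪ Fin n, prPL n k (fun _ => 0) r C = prC n k (fun _ => c) C := by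
    intro C
    by_cases h : k ≤ C.card
    · rw [sum_prPL n k C h, mul_one]
    · simp [prC, h]
  simp_rw [this]
  unfold prC
  rw [← Finset.sum_filter, ← Finset.sum_div]
  exact div_self (zConst_pos n k hk c h0 h1).ne'

lemma prPLC_symm (n k : ℕ) (c : ℝ) (r r' : Fin k ↪ Fin n) :
    prPLC n k (fun _ => 0) (fun _ => c) r = prPLC n k (fun _ => 0) (fun _ => c) r' := by
  obtain ⟨σ, hσ⟩ := (Equiv.Perm.isMultiplyPretransitive (Fin n) k).exists_smul_eq r r'
  have hσ' : ∀ t, r' t = σ (r t) := fun t => by rw [← hσ]; rfl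
  unfold prPLC
  refine Fintype.sum_equiv (Equiv.finsetCongr σ) _ _ fun C => ?_
  simp [prPL_zero, prC, weight_const, hσ']

lemma prPLC_eq (n k : ℕ) (hk : k ≤ n) (c : ℝ) (h0 : 0 < c) (h1 : c ≤ 1) (r : Fin k ↪ Fin n) :
    prPLC n k (fun _ => 0) (fun _ => c) r = (Fintype.card (Fin k ↪ Fin n) : ℝ)⁻¹ := by
  have h := sum_prPLC n k hk c h0 h1
  rw [Finset.sum_congr rfl (fun r' _ => prPLC_symm n k c r' r), Finset.sum_const,
    nsmul_eq_mul] at h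
  exact eq_inv_of_mul_eq_one_right h

/-- Non-identifiability of consideration probabilities in the PL+C model. -/
theorem nonidentifiability :
    ∀ n k : ℕ, 1 ≤ n → 1 ≤ k → k ≤ n →
      ∃ (u p p' : Fin n → ℝ),
        (∀ a, 0 < p a ∧ p a ≤ 1) ∧ (∀ a, 0 < p' a ∧ p' a ≤ 1) ∧ p ≠ p' ∧
        ∀ r : Fin k ↪ Fin n, prPLC n k u p r = prPLC n k u p' r := by
  intro n k hn _ hk
  refine ⟨fun _ => 0, fun _ => 1, fun _ => 1 / 2, fun _ => by norm_num, fun _ => by norm_num,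
    fun h => ?_, fun r => ?_⟩
  · have := congrFun h ⟨0, hn⟩
    norm_num at this
  · rw [prPLC_eq n k hk 1 (by norm_num) (by norm_num),
      prPLC_eq n k hk (1 / 2) (by norm_num) (by norm_num)]
end
end

section
/- Let R be a random top-k ranking generated by the PL+C model, and for items i, j ∈ U let i ≻_R j denote that i is ranked higher (closer to first) than j in R. If Pr(i ≻_R j | i, j ∈ R) > 1/2, then u_i > u_j. -/
open scoped Classical
open Finset

noncomputable section

/-- The set of length-`k` rankings containing both `i` and `j`, with `i` ranked above `j`. -/
def aboveSet (n k : ℕ) (i j : Fin n) : Finset (Fin k ↪ Fin n) :=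
  Finset.univ.filter (fun r => ∃ s t : Fin k, s < t ∧ r s = i ∧ r t = j)

/-- The set of length-`k` rankings containing both `i` and `j`. -/
def bothSet (n k : ℕ) (i j : Fin n) : Finset (Fin k ↪ Fin n) :=
  Finset.univ.filter (fun r => (∃ s : Fin k, r s = i) ∧ ∃ t : Fin k, r t = j)

theorem prC_nonneg_aux (n k : ℕ) (p : Fin n → ℝ) (hp : ∀ a, 0 < p a ∧ p a ≤ 1)
    (C : Finset (Fin n)) : 0 ≤ prC n k p C := by
  have hw : ∀ C, 0 ≤ considerWeight n p C := by
    intro C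
    unfold considerWeight
    exact mul_nonneg (Finset.prod_nonneg fun a _ => (hp a).1.le)
      (Finset.prod_nonneg fun a _ => sub_nonneg.2 (hp a).2)
  unfold prC
  split_ifs
  · exact div_nonneg (hw C) (Finset.sum_nonneg fun C _ => hw C)
  · exact le_rfl

theorem denom_aux (n : ℕ) (u : Fin n → ℝ) (i j : Fin n) (hu : u i ≤ u j)
    (S : Finset (Fin n)) (hS : i ∈ S → j ∈ S) :
    ∑ x ∈ S, Real.exp (u (Equiv.swap i j x)) ≤ ∑ x ∈ S, Real.exp (u x) := by
  by_cases hi : i ∈ S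
  · have hj := hS hi
    apply le_of_eq
    apply Finset.sum_bij (fun x _ => Equiv.swap i j x)
    · intro a ha
      by_cases h1 : a = i
      · simpa [h1] using hj
      by_cases h2 : a = j
      · simpa [h2] using hi
      rwa [Equiv.swap_apply_of_ne_of_ne h1 h2]
    · intro a _ b _ h
      exact (Equiv.swap i j).injective h
    · intro b hb
      refine ⟨Equiv.swap i j b, ?_, by simp⟩
      by_cases h1 : b = i
      · simpa [h1] using hj
      by_cases h2 : b = j
      · simpa [h2] using hi
      rwa [Equiv.swap_apply_of_ne_of_ne h1 h2]
    · intro a _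
      rfl
  · apply Finset.sum_le_sum
    intro x hx
    apply Real.exp_le_exp.2
    have h1 : x ≠ i := fun h => hi (h ▸ hx)
    by_cases h2 : x = j
    · simpa [h2] using hu
    rw [Equiv.swap_apply_of_ne_of_ne h1 h2]

theorem prPL_swap_le (n k : ℕ) (u : Fin n → ℝ) (i j : Fin n) (hu : u i ≤ u j)
    (r : Fin k ↪ Fin n) (hr : r ∈ aboveSet n k i j) (C : Finset (Fin n)) :
    prPL n k u r C ≤ prPL n k u (r.trans (Equiv.swap i j).toEmbedding) C := by
  simp only [aboveSet, Finset.mem_filter, Finset.mem_univ, true_and] at hr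
  obtain ⟨s, t, hst, hs, ht⟩ := hr
  have key : ∀ x, Equiv.swap i j (r x) = r (Equiv.swap s t x) := by
    intro x
    by_cases h1 : x = s
    · simp [h1, hs, ht]
    by_cases h2 : x = t
    · simp [h2, hs, ht]
    rw [Equiv.swap_apply_of_ne_of_ne h1 h2, Equiv.swap_apply_of_ne_of_ne]
    · rw [← hs]; exact fun h => h1 (r.injective h)
    · rw [← ht]; exact fun h => h2 (r.injective h)
  unfold prPL
  by_cases hC : ∀ t, r t ∈ C
  · have hC' : ∀ t, (r.trans (Equiv.swap i j).toEmbedding) t ∈ C := by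
      intro x
      simp only [Function.Embedding.trans_apply, Equiv.coe_toEmbedding]
      rw [key]; exact hC _
    rw [if_pos hC, if_pos hC', Finset.prod_div_distrib, Finset.prod_div_distrib]
    have hnum : ∏ x, Real.exp (u ((r.trans (Equiv.swap i j).toEmbedding) x))
        = ∏ x, Real.exp (u (r x)) := by
      simp only [Function.Embedding.trans_apply, Equiv.coe_toEmbedding, key]
      exact Equiv.prod_comp (Equiv.swap s t) (fun x => Real.exp (u (r x)))
    rw [hnum]
    have hiC : i ∈ C := hs ▸ hC s
    have hjC : j ∈ C := ht ▸ hC t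
    have hCs : ∀ x, Equiv.swap i j x ∈ C ↔ x ∈ C := by
      intro x
      by_cases h1 : x = i
      · simp [h1, hiC, hjC]
      by_cases h2 : x = j
      · simp [h2, hiC, hjC]
      rw [Equiv.swap_apply_of_ne_of_ne h1 h2]
    have hpos : ∀ x, 0 < ∑ y ∈ C \ (Finset.Iio x).image
        (r.trans (Equiv.swap i j).toEmbedding), Real.exp (u y) := by
      intro x
      apply Finset.sum_pos (fun _ _ => Real.exp_pos _)
      refine ⟨_, Finset.mem_sdiff.2 ⟨hC' x, ?_⟩⟩
      intro h
      obtain ⟨y, hy, hyx⟩ := Finset.mem_image.1 h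
      have := (r.trans (Equiv.swap i j).toEmbedding).injective hyx
      rw [this] at hy
      simp at hy
    apply div_le_div_of_nonneg_left
    · exact Finset.prod_nonneg fun _ _ => (Real.exp_pos _).le
    · exact Finset.prod_pos fun x _ => hpos x
    · apply Finset.prod_le_prod
      · intro x _
        exact (hpos x).le
      · intro x _
        refine le_trans (le_of_eq ?_) (denom_aux n u i j hu _ ?_)
        · apply Finset.sum_bij (fun y _ => Equiv.swap i j y)
          · intro y hy
            rw [Finset.mem_sdiff] at hy ⊢
            refine ⟨(hCs y).2 hy.1, fun h => hy.2 ?_⟩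
            obtain ⟨w, hw, hwy⟩ := Finset.mem_image.1 h
            refine Finset.mem_image.2 ⟨w, hw, ?_⟩
            simp [hwy]
          · intro a _ b _ h
            exact (Equiv.swap i j).injective h
          · intro y hy
            rw [Finset.mem_sdiff] at hy
            refine ⟨Equiv.swap i j y, ?_, by simp⟩
            rw [Finset.mem_sdiff]
            refine ⟨(hCs y).2 hy.1, fun h => hy.2 ?_⟩
            obtain ⟨w, hw, hwy⟩ := Finset.mem_image.1 h
            refine Finset.mem_image.2 ⟨w, hw, ?_⟩
            apply (Equiv.swap i j).injective
            simpa using hwy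
          · intro y _
            simp
        · intro hi
          rw [Finset.mem_sdiff] at hi ⊢
          refine ⟨hjC, fun h => hi.2 ?_⟩
          obtain ⟨w, hw, hwy⟩ := Finset.mem_image.1 h
          have hwt : w = t := r.injective (hwy.trans ht.symm)
          subst hwt
          exact Finset.mem_image.2
            ⟨s, Finset.mem_Iio.2 (hst.trans (Finset.mem_Iio.1 hw)), hs⟩
  · have hC' : ¬ ∀ t, (r.trans (Equiv.swap i j).toEmbedding) t ∈ C := by
      intro h
      apply hC
      intro x
      have := h (Equiv.swap s t x)
      simp only [Function.Embedding.trans_apply, Equiv.coe_toEmbedding] at this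
      rw [key] at this
      simpa using this
    rw [if_neg hC, if_neg hC']

theorem prPLC_swap_le (n k : ℕ) (u p : Fin n → ℝ) (hp : ∀ a, 0 < p a ∧ p a ≤ 1)
    (i j : Fin n) (hu : u i ≤ u j) :
    prPLCset n k u p (aboveSet n k i j) ≤ prPLCset n k u p (aboveSet n k j i) := by
  unfold prPLCset
  calc ∑ r ∈ aboveSet n k i j, prPLC n k u p r
      ≤ ∑ r ∈ aboveSet n k i j,
          prPLC n k u p (r.trans (Equiv.swap i j).toEmbedding) := by
        apply Finset.sum_le_sum
        intro r hr
        unfold prPLC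
        apply Finset.sum_le_sum
        intro C _
        exact mul_le_mul_of_nonneg_left (prPL_swap_le n k u i j hu r hr C)
          (prC_nonneg_aux n k p hp C)
    _ = ∑ r ∈ aboveSet n k j i, prPLC n k u p r := by
        apply Finset.sum_bij
          (fun (r : Fin k ↪ Fin n) _ => r.trans (Equiv.swap i j).toEmbedding)
        · intro r hr
          simp only [aboveSet, Finset.mem_filter, Finset.mem_univ, true_and] at hr ⊢
          obtain ⟨s, t, hst, hs, ht⟩ := hr
          exact ⟨s, t, hst, by simp [hs], by simp [ht]⟩
        · intro a _ b _ h
          apply DFunLike.ext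
          intro x
          have := DFunLike.congr_fun h x
          simpa using this
        · intro r hr
          refine ⟨r.trans (Equiv.swap i j).toEmbedding, ?_, ?_⟩
          · simp only [aboveSet, Finset.mem_filter, Finset.mem_univ, true_and] at hr ⊢
            obtain ⟨s, t, hst, hs, ht⟩ := hr
            exact ⟨s, t, hst, by simp [hs], by simp [ht]⟩
          · ext x
            simp
        · intro r _
          rfl

theorem both_split (n k : ℕ) (u p : Fin n → ℝ) (i j : Fin n) (hij : i ≠ j) :
    prPLCset n k u p (bothSet n k i j) =
      prPLCset n k u p (aboveSet n k i j) + prPLCset n k u p (aboveSet n k j i) := by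
  unfold prPLCset
  rw [← Finset.sum_union]
  · congr 1
    ext r
    simp only [bothSet, aboveSet, Finset.mem_union, Finset.mem_filter, Finset.mem_univ, true_and]
    constructor
    · rintro ⟨⟨s, hs⟩, t, ht⟩
      rcases lt_trichotomy s t with h | h | h
      · exact Or.inl ⟨s, t, h, hs, ht⟩
      · subst h
        exact absurd (hs.symm.trans ht) hij
      · exact Or.inr ⟨t, s, h, ht, hs⟩
    · rintro (⟨s, t, _, hs, ht⟩ | ⟨s, t, _, hs, ht⟩)
      · exact ⟨⟨s, hs⟩, t, ht⟩
      · exact ⟨⟨t, ht⟩, s, hs⟩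
  · rw [Finset.disjoint_left]
    intro r h1 h2
    simp only [aboveSet, Finset.mem_filter, Finset.mem_univ, true_and] at h1 h2
    obtain ⟨s, t, hst, hs, ht⟩ := h1
    obtain ⟨s', t', hst', hs', ht'⟩ := h2
    have e1 : s = t' := r.injective (hs.trans ht'.symm)
    have e2 : t = s' := r.injective (ht.trans hs'.symm)
    subst e1 e2
    exact absurd hst (not_lt.2 hst'.le)

/-- if, conditioned on both `i` and `j` appearing in a PL+C ranking, `i` is
ranked above `j` with probability greater than 1/2, then `u i > u j`. -/
theorem infer_relative_utility (n k : ℕ) (u p : Fin n → ℝ) (i j : Fin n)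
    (hp : ∀ a, 0 < p a ∧ p a ≤ 1)
    (hpos : 0 < prPLCset n k u p (bothSet n k i j))
    (hmaj : prPLCset n k u p (aboveSet n k i j) / prPLCset n k u p (bothSet n k i j)
            > 1 / 2) :
    u i > u j := by
  by_contra hu
  have hu : u i ≤ u j := not_lt.1 hu
  rw [gt_iff_lt, lt_div_iff₀ hpos] at hmaj
  by_cases hij : i = j
  · subst hij
    have h0 : aboveSet n k i i = ∅ := by
      ext r
      simp only [aboveSet, Finset.mem_filter, Finset.mem_univ, true_and, Finset.notMem_empty,
        iff_false]
      rintro ⟨s, t, hst, hs, ht⟩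
      exact hst.ne (r.injective (hs.trans ht.symm))
    rw [h0] at hmaj
    have : prPLCset n k u p ∅ = 0 := by simp [prPLCset]
    linarith
  · have h1 := both_split n k u p i j hij
    have h2 := prPLC_swap_le n k u p hp i j hu
    linarith
end
end

section
/- Let r be a length-k ranking containing both items i and j with i ranked above j, let r_swap be r with the positions of i and j exchanged, and let C ⊆ U contain all items of r. If u_i > u_j, then Pr_PL(r | C) > Pr_PL(r_swap | C). -/
open scoped Classical
open Finset

noncomputable section

theorem aux_den (n k : ℕ) (u : Fin n → ℝ) (r : Fin k ↪ Fin n) (C : Finset (Fin n))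
    (hrC : ∀ a : Fin k, r a ∈ C) (a : Fin k) :
    ∑ j ∈ C \ (Finset.Iio a).image r, Real.exp (u j)
      = ∑ j ∈ C, Real.exp (u j) - ∑ b ∈ Finset.Iio a, Real.exp (u (r b)) := by
  have hsub : (Finset.Iio a).image r ⊆ C := by
    intro x hx
    obtain ⟨b, _, rfl⟩ := Finset.mem_image.1 hx
    exact hrC b
  have h1 := Finset.sum_sdiff hsub (f := fun j => Real.exp (u j))
  have h2 : ∑ j ∈ (Finset.Iio a).image r, Real.exp (u j)
      = ∑ b ∈ Finset.Iio a, Real.exp (u (r b)) :=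
    Finset.sum_image (fun x _ y _ h => r.injective h)
  linarith

theorem aux_pos (n k : ℕ) (u : Fin n → ℝ) (r : Fin k ↪ Fin n) (C : Finset (Fin n))
    (hrC : ∀ a : Fin k, r a ∈ C) (a : Fin k) :
    0 < ∑ j ∈ C \ (Finset.Iio a).image r, Real.exp (u j) := by
  apply Finset.sum_pos (fun _ _ => Real.exp_pos _)
  refine ⟨r a, ?_⟩
  simp [hrC a]

/-- swapping a higher-utility item `i` (ranked above a lower-utility item `j`)
with `j` strictly decreases the Plackett–Luce probability of the ranking. -/
theorem swap_decreases_prPL (n k : ℕ) (u : Fin n → ℝ) (i j : Fin n)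
    (r : Fin k ↪ Fin n) (C : Finset (Fin n)) (hu : u i > u j)
    (s t : Fin k) (hst : s < t) (hs : r s = i) (ht : r t = j)
    (hrC : ∀ a : Fin k, r a ∈ C) :
    prPL n k u r C > prPL n k u (r.trans (Equiv.swap i j).toEmbedding) C := by
  subst hs ht
  set r' := r.trans (Equiv.swap (r s) (r t)).toEmbedding with hr'
  have hr : ∀ b, r' b = r (Equiv.swap s t b) := by
    intro b
    simp [hr', Equiv.swap_apply_def, r.injective.eq_iff]
    split_ifs <;> rfl
  have hrC' : ∀ a, r' a ∈ C := fun a => by rw [hr]; exact hrC _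
  have hexp : Real.exp (u (r t)) < Real.exp (u (r s)) := Real.exp_lt_exp.2 hu
  have hne : s ≠ t := hst.ne
  have hD : ∀ a, ∑ b ∈ Finset.Iio a, Real.exp (u (r b)) - ∑ b ∈ Finset.Iio a, Real.exp (u (r' b))
      = (Real.exp (u (r s)) - Real.exp (u (r t))) *
        ((if s < a then 1 else 0) - (if t < a then 1 else 0)) := by
    intro a
    have hb : ∀ b, Real.exp (u (r b)) - Real.exp (u (r' b)) =
        (Real.exp (u (r s)) - Real.exp (u (r t))) *
        ((if b = s then 1 else 0) - (if b = t then 1 else 0)) := by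
      intro b
      rw [hr]
      by_cases h1 : b = s
      · subst h1; simp [hne]
      · by_cases h2 : b = t
        · subst h2; simp [h1]
        · simp [h1, h2, Equiv.swap_apply_of_ne_of_ne h1 h2]
    rw [← Finset.sum_sub_distrib, Finset.sum_congr rfl (fun b _ => hb b), ← Finset.mul_sum,
      Finset.sum_sub_distrib]
    simp
  have hle : ∀ a, ∑ j ∈ C \ (Finset.Iio a).image r, Real.exp (u j)
      ≤ ∑ j ∈ C \ (Finset.Iio a).image r', Real.exp (u j) := by
    intro a
    rw [aux_den n k u r C hrC, aux_den n k u r' C hrC']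
    have := hD a
    have h0 : (0:ℝ) ≤ (if s < a then 1 else 0) - (if t < a then 1 else 0) := by
      by_cases h : t < a
      · simp [h, hst.trans h]
      · simp only [h, if_false]; split_ifs <;> norm_num
    have := mul_nonneg (sub_nonneg.2 hexp.le) h0
    linarith
  have hlt : ∑ j ∈ C \ (Finset.Iio t).image r, Real.exp (u j)
      < ∑ j ∈ C \ (Finset.Iio t).image r', Real.exp (u j) := by
    rw [aux_den n k u r C hrC, aux_den n k u r' C hrC']
    have := hD t
    simp [hst] at this
    linarith
  unfold prPL
  rw [if_pos hrC, if_pos hrC', Finset.prod_div_distrib, Finset.prod_div_distrib]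
  have hnum : ∏ a, Real.exp (u (r' a)) = ∏ a, Real.exp (u (r a)) := by
    simp only [hr]
    exact Equiv.prod_comp (Equiv.swap s t) (fun a => Real.exp (u (r a)))
  rw [hnum]
  apply div_lt_div_of_pos_left
  · exact Finset.prod_pos fun _ _ => Real.exp_pos _
  · exact Finset.prod_pos fun a _ => aux_pos n k u r C hrC a
  · exact Finset.prod_lt_prod (fun a _ => aux_pos n k u r C hrC a) (fun a _ => hle a)
      ⟨t, Finset.mem_univ _, hlt⟩
end
end

section
/- Let r be a length-k ranking containing item i but not item j, let r_{i→j} be r with item i replaced by item j in its position, and let C ⊆ U with {r_1,...,r_k} ⊆ C, i ∈ C, and j ∈ C. If u_i > u_j, then Pr_PL(r | C) > Pr_PL(r_{i→j} | C). -/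
open scoped Classical
open Finset

noncomputable section

/-- replacing item `i` in a ranking by a lower-utility item `j ∈ C` not
appearing in the ranking strictly decreases the Plackett–Luce probability. -/
theorem replace_decreases_prPL (n k : ℕ) (u : Fin n → ℝ) (i j : Fin n)
    (r : Fin k ↪ Fin n) (C : Finset (Fin n)) (hu : u i > u j)
    (s : Fin k) (hs : r s = i) (hj : ∀ t : Fin k, r t ≠ j)
    (hrC : ∀ a : Fin k, r a ∈ C) (hjC : j ∈ C) :
    prPL n k u r C > prPL n k u (r.trans (Equiv.swap i j).toEmbedding) C := by
  have hiC : i ∈ C := hs ▸ hrC s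
  have hij : i ≠ j := fun h => hj s (hs.trans h)
  have hfix : ∀ t, t ≠ s → Equiv.swap i j (r t) = r t := by
    intro t ht
    refine Equiv.swap_apply_of_ne_of_ne ?_ (hj t)
    intro h
    exact ht (r.injective (h.trans hs.symm))
  have hsw : ∀ x, Equiv.swap i j x ∈ C ↔ x ∈ C := by
    intro x
    by_cases h1 : x = i
    · subst h1; simp [hiC, hjC]
    by_cases h2 : x = j
    · subst h2; simp [hiC, hjC]
    rw [Equiv.swap_apply_of_ne_of_ne h1 h2]
  have hC' : ∀ t : Fin k, (r.trans (Equiv.swap i j).toEmbedding) t ∈ C := by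
    intro t
    simpa [hsw] using hrC t
  have hpos : ∀ (q : Fin k ↪ Fin n) (t : Fin k), (∀ a, q a ∈ C) →
      0 < ∑ x ∈ C \ (Finset.Iio t).image q, Real.exp (u x) := by
    intro q t hq
    refine Finset.sum_pos (fun x _ => Real.exp_pos _) ⟨q t, ?_⟩
    simp [hq t]
  have hden : ∀ t : Fin k, ∑ x ∈ C \ (Finset.Iio t).image r, Real.exp (u x) ≤
      ∑ x ∈ C \ (Finset.Iio t).image (r.trans (Equiv.swap i j).toEmbedding), Real.exp (u x) := by
    intro t
    by_cases hst : s < t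
    · have himg : C \ (Finset.Iio t).image (r.trans (Equiv.swap i j).toEmbedding) =
          (C \ (Finset.Iio t).image r).map (Equiv.swap i j).toEmbedding := by
        ext x
        rw [Finset.mem_map_equiv, Equiv.symm_swap, Finset.mem_sdiff, Finset.mem_sdiff, hsw]
        refine and_congr_right fun _ => not_congr ?_
        simp only [Finset.mem_image, Function.Embedding.trans_apply, Equiv.coe_toEmbedding]
        refine exists_congr fun a => and_congr_right fun _ => ?_
        rw [Equiv.swap_apply_eq_iff]
      rw [himg, Finset.sum_map]
      refine Finset.sum_le_sum fun x hx => Real.exp_le_exp.2 ?_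
      have hxi : x ≠ i := by
        rintro rfl
        exact (Finset.mem_sdiff.1 hx).2 (Finset.mem_image.2 ⟨s, by simpa using hst, hs⟩)
      rw [Equiv.coe_toEmbedding]
      by_cases h2 : x = j
      · subst h2; simpa using hu.le
      · rw [Equiv.swap_apply_of_ne_of_ne hxi h2]
    · have himg : (Finset.Iio t).image (r.trans (Equiv.swap i j).toEmbedding) =
          (Finset.Iio t).image r := by
        refine Finset.image_congr fun a ha => ?_
        have ha' : a < t := by simpa using ha
        exact hfix a (fun h => hst (h ▸ ha'))
      rw [himg]
  have hnum : ∀ t : Fin k,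
      Real.exp (u ((r.trans (Equiv.swap i j).toEmbedding) t)) ≤ Real.exp (u (r t)) := by
    intro t
    refine Real.exp_le_exp.2 ?_
    by_cases h : t = s
    · subst h; simpa [hs] using hu.le
    · simp [hfix t h]
  unfold prPL
  rw [if_pos hrC, if_pos hC', gt_iff_lt]
  refine Finset.prod_lt_prod (fun t _ => div_pos (Real.exp_pos _) (hpos _ t hC')) (fun t _ =>
    div_le_div₀ (Real.exp_pos _).le (hnum t) (hpos _ t hrC) (hden t)) ⟨s, Finset.mem_univ _, ?_⟩
  refine div_lt_div₀ ?_ (hden s) (Real.exp_pos _).le (hpos _ s hrC)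
  simpa [hs] using hu
end
end

section
/- Suppose Σ_{i∈U} p_i ≥ αk for some α > 1. Then for every item i ∈ U, the consideration probability of i is lower bounded as p_i ≥ Pr_{PL+C}(R_{i≤k}) · [1 - (α e^{1-α})^k], where R_{i≤k} is the set of length-k rankings containing i. -/
open scoped Classical
open Finset

noncomputable section

theorem aux_weight_nonneg (n : ℕ) (p : Fin n → ℝ) (hp : ∀ a, 0 < p a ∧ p a ≤ 1)
    (C : Finset (Fin n)) : 0 ≤ considerWeight n p C := by
  unfold considerWeight
  refine mul_nonneg (prod_nonneg fun a _ => (hp a).1.le) (prod_nonneg fun a _ => ?_)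
  linarith [(hp a).2]

theorem aux_prod (n : ℕ) (f g : Fin n → ℝ) :
    ∑ C : Finset (Fin n), (∏ a ∈ C, f a) * ∏ a ∈ Cᶜ, g a = ∏ a, (f a + g a) := by
  rw [Finset.prod_add]
  simp [Finset.compl_eq_univ_sdiff]

theorem aux_total (n : ℕ) (p : Fin n → ℝ) :
    ∑ C : Finset (Fin n), considerWeight n p C = 1 := by
  unfold considerWeight
  rw [aux_prod]
  simp

theorem aux_marg (n : ℕ) (p : Fin n → ℝ) (i : Fin n) :
    ∑ C : Finset (Fin n), (if i ∈ C then considerWeight n p C else 0) = p i := by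
  have h := aux_prod n p (fun a => if a = i then 0 else 1 - p a)
  have h2 : ∏ a, (p a + (if a = i then 0 else 1 - p a)) = p i := by
    rw [Finset.prod_eq_single i]
    · simp
    · intro b _ hb
      simp [hb]
    · simp
  rw [← h2, ← h]
  refine sum_congr rfl fun C _ => ?_
  unfold considerWeight
  split_ifs with hi
  · congr 1
    refine prod_congr rfl fun a ha => ?_
    have : a ≠ i := by
      rintro rfl
      simp at ha
      exact ha hi
    simp [this]
  · symm
    apply mul_eq_zero_of_right
    exact prod_eq_zero (i := i) (by simpa using hi) (by simp)

theorem aux_z (n k : ℕ) (p : Fin n → ℝ) (α : ℝ)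
    (hp : ∀ a, 0 < p a ∧ p a ≤ 1) (hα : 1 < α) (hsum : α * k ≤ ∑ a, p a) :
    1 - (α * Real.exp (1 - α)) ^ k ≤ zConst n k p := by
  have hα0 : 0 < α := by linarith
  have h1 : ∑ C : Finset (Fin n), (considerWeight n p C * (α⁻¹) ^ C.card)
      = ∏ a, (p a * α⁻¹ + (1 - p a)) := by
    rw [← aux_prod]
    refine sum_congr rfl fun C _ => ?_
    unfold considerWeight
    rw [prod_mul_distrib, prod_const]
    ring
  have h2 : ∏ a, (p a * α⁻¹ + (1 - p a)) ≤ Real.exp ((1 - α) * k) := by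
    have hinv : α⁻¹ ≤ 1 := inv_le_one_of_one_le₀ hα.le
    calc ∏ a, (p a * α⁻¹ + (1 - p a)) ≤ ∏ a, Real.exp ((α⁻¹ - 1) * p a) := by
          refine prod_le_prod (fun a _ => ?_) (fun a _ => ?_)
          · have := mul_nonneg (hp a).1.le (inv_nonneg.2 hα0.le)
            linarith [(hp a).2]
          · have := Real.add_one_le_exp ((α⁻¹ - 1) * p a)
            linarith
      _ = Real.exp ((α⁻¹ - 1) * ∑ a, p a) := by
          rw [← Real.exp_sum, mul_sum]
      _ ≤ _ := by
          apply Real.exp_le_exp.2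
          have : (α⁻¹ - 1) * ∑ a, p a ≤ (α⁻¹ - 1) * (α * k) :=
            mul_le_mul_of_nonpos_left hsum (by linarith)
          refine this.trans (le_of_eq ?_)
          field_simp
  have h3 : ∑ C ∈ univ.filter (fun C : Finset (Fin n) => ¬ k ≤ C.card), considerWeight n p C
      ≤ α ^ k * ∑ C : Finset (Fin n), (considerWeight n p C * (α⁻¹) ^ C.card) := by
    rw [mul_sum, sum_filter]
    refine sum_le_sum fun C _ => ?_
    have hw := aux_weight_nonneg n p hp C
    split_ifs with hc
    · positivity
    · have : (1:ℝ) ≤ α ^ k * (α⁻¹) ^ C.card := by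
        rw [inv_pow, ← div_eq_mul_inv, one_le_div (by positivity)]
        exact pow_le_pow_right₀ hα.le (by omega)
      nlinarith
  have h4 := sum_filter_add_sum_filter_not univ (fun C : Finset (Fin n) => k ≤ C.card)
    (considerWeight n p)
  rw [aux_total] at h4
  have h5 : (α * Real.exp (1 - α)) ^ k = α ^ k * Real.exp ((1 - α) * k) := by
    rw [mul_pow, ← Real.exp_nat_mul, mul_comm (k:ℝ)]
  have h6 := mul_le_mul_of_nonneg_left h2 (pow_nonneg hα0.le k)
  rw [h5]
  rw [h1] at h3
  unfold zConst
  linarith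

def auxS (n k : ℕ) (C : Finset (Fin n)) (r : Fin k → Fin n) (t : Fin k) : Finset (Fin n) :=
  C \ (Finset.Iio t).image r

def auxG (n k : ℕ) (u : Fin n → ℝ) (C : Finset (Fin n)) (r : Fin k → Fin n) : ℝ :=
  ∏ t : Fin k, if r t ∈ auxS n k C r t then
    Real.exp (u (r t)) / ∑ j ∈ auxS n k C r t, Real.exp (u j) else 0

theorem auxG_nonneg (n k : ℕ) (u : Fin n → ℝ) (C : Finset (Fin n)) (r : Fin k → Fin n) :
    0 ≤ auxG n k u C r := by
  unfold auxG
  refine prod_nonneg fun t _ => ?_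
  split_ifs <;> positivity

theorem aux_step (n : ℕ) (u : Fin n → ℝ) (S : Finset (Fin n)) :
    ∑ a : Fin n, (if a ∈ S then Real.exp (u a) / ∑ j ∈ S, Real.exp (u j) else 0) ≤ 1 := by
  rw [← sum_filter]
  simp only [filter_univ_mem]
  rw [← sum_div]
  exact div_self_le_one _

theorem auxS_castSucc (n k : ℕ) (C : Finset (Fin n)) (r : Fin k → Fin n) (a : Fin n) (t : Fin k) :
    auxS n (k+1) C (Fin.snoc (α := fun _ => Fin n) r a) t.castSucc = auxS n k C r t := by
  unfold auxS
  congr 1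
  ext x
  simp only [mem_image, mem_Iio]
  constructor
  · rintro ⟨s, hs, rfl⟩
    refine ⟨⟨s, lt_trans (Fin.lt_def.1 hs) t.2⟩, Fin.lt_def.1 hs, ?_⟩
    have : s = Fin.castSucc ⟨s, lt_trans (Fin.lt_def.1 hs) t.2⟩ := rfl
    conv_rhs => rw [this]
    rw [Fin.snoc_castSucc]
  · rintro ⟨s, hs, rfl⟩
    exact ⟨s.castSucc, hs, by rw [Fin.snoc_castSucc]⟩

theorem auxS_last (n k : ℕ) (C : Finset (Fin n)) (r : Fin k → Fin n) (a b : Fin n) :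
    auxS n (k+1) C (Fin.snoc (α := fun _ => Fin n) r a) (Fin.last k) =
    C \ univ.image r := by
  unfold auxS
  congr 1
  ext x
  simp only [mem_image, mem_Iio, mem_univ, true_and]
  constructor
  · rintro ⟨s, hs, rfl⟩
    refine ⟨⟨s, Fin.lt_def.1 hs⟩, ?_⟩
    have : s = Fin.castSucc ⟨s, Fin.lt_def.1 hs⟩ := rfl
    conv_rhs => rw [this]
    rw [Fin.snoc_castSucc]
  · rintro ⟨s, rfl⟩
    exact ⟨s.castSucc, Fin.castSucc_lt_last s, by rw [Fin.snoc_castSucc]⟩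

theorem auxG_sum (n k : ℕ) (u : Fin n → ℝ) (C : Finset (Fin n)) :
    ∑ r : Fin k → Fin n, auxG n k u C r ≤ 1 := by
  induction k with
  | zero => simp [auxG]
  | succ k ih =>
    rw [← (Fin.snocEquiv (fun _ : Fin (k+1) => Fin n)).sum_comp, Fintype.sum_prod_type_right]
    refine le_trans (sum_le_sum fun r _ => ?_) ih
    have : ∀ a : Fin n, auxG n (k+1) u C (Fin.snocEquiv (fun _ : Fin (k+1) => Fin n) (a, r)) =
        auxG n k u C r * (if a ∈ C \ univ.image r then
          Real.exp (u a) / ∑ j ∈ C \ univ.image r, Real.exp (u j) else 0) := by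
      intro a
      simp only [Fin.snocEquiv, Equiv.coe_fn_mk]
      unfold auxG
      rw [Fin.prod_univ_castSucc]
      simp only [auxS_castSucc, auxS_last n k C r a a, Fin.snoc_castSucc, Fin.snoc_last]
    simp only [this]
    rw [← mul_sum]
    exact mul_le_of_le_one_right (auxG_nonneg ..) (aux_step ..)

theorem aux_prPL_nonneg (n k : ℕ) (u : Fin n → ℝ) (r : Fin k ↪ Fin n) (C : Finset (Fin n)) :
    0 ≤ prPL n k u r C := by
  unfold prPL
  split_ifs <;> positivity

theorem aux_prPL_le (n k : ℕ) (u : Fin n → ℝ) (r : Fin k ↪ Fin n) (C : Finset (Fin n)) :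
    prPL n k u r C ≤ auxG n k u C r := by
  unfold prPL
  split_ifs with h
  · unfold auxG
    refine le_of_eq (prod_congr rfl fun t _ => ?_)
    have : r t ∈ auxS n k C r t := by
      simp only [auxS, mem_sdiff, mem_image, mem_Iio]
      refine ⟨h t, ?_⟩
      rintro ⟨s, hs, he⟩
      exact hs.ne (r.injective he)
    rw [if_pos this]
    rfl
  · exact auxG_nonneg ..

theorem aux_PL_sum (n k : ℕ) (u : Fin n → ℝ) (C : Finset (Fin n)) (R : Finset (Fin k ↪ Fin n)) :
    ∑ r ∈ R, prPL n k u r C ≤ 1 := by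
  refine le_trans ?_ (auxG_sum n k u C)
  refine le_trans (sum_le_sum fun r _ => aux_prPL_le n k u r C) ?_
  rw [← sum_image (s := R) (g := fun r : Fin k ↪ Fin n => (r : Fin k → Fin n))
    (f := fun r => auxG n k u C r) (fun a _ b _ h => DFunLike.coe_injective h)]
  exact sum_le_sum_of_subset_of_nonneg (subset_univ _) fun _ _ _ => auxG_nonneg ..

/-- initial lower bound on consideration probabilities:
`p_i ≥ Pr_{PL+C}(R_{i≤k}) · [1 - (α e^{1-α})^k]`. -/
theorem consideration_initial_LB (n k : ℕ) (u p : Fin n → ℝ) (α : ℝ) (i : Fin n)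
    (hp : ∀ a, 0 < p a ∧ p a ≤ 1) (hk : 1 ≤ k) (hkn : k ≤ n)
    (hα : 1 < α) (hsum : α * k ≤ ∑ a, p a) :
    p i ≥ prPLCset n k u p (topSet n k i k) * (1 - (α * Real.exp (1 - α)) ^ k) := by
  have hz0 : 0 ≤ zConst n k p := sum_nonneg fun C _ => aux_weight_nonneg n p hp C
  have hz := aux_z n k p α hp hα hsum
  have hC : ∀ C, 0 ≤ prC n k p C := by
    intro C
    have := aux_weight_nonneg n p hp C
    unfold prC
    split_ifs <;> positivity
  have hP0 : 0 ≤ prPLCset n k u p (topSet n k i k) :=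
    sum_nonneg fun r _ => sum_nonneg fun C _ => mul_nonneg (hC C) (aux_prPL_nonneg ..)
  have hP : prPLCset n k u p (topSet n k i k) ≤ p i / zConst n k p := by
    unfold prPLCset prPLC
    rw [sum_comm, ← aux_marg n p i, sum_div]
    refine sum_le_sum fun C _ => ?_
    rw [← mul_sum]
    have hw := aux_weight_nonneg n p hp C
    split_ifs with hi
    · refine le_trans (mul_le_of_le_one_right (hC C) (aux_PL_sum ..)) ?_
      unfold prC
      split_ifs
      · exact le_rfl
      · positivity
    · have : ∑ r ∈ topSet n k i k, prPL n k u r C = 0 := by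
        refine sum_eq_zero fun r hr => ?_
        simp only [topSet, mem_filter, mem_univ, true_and] at hr
        obtain ⟨t, _, ht⟩ := hr
        unfold prPL
        rw [if_neg]
        intro h
        exact hi (ht ▸ h t)
      rw [this]
      simp
  calc _ ≤ prPLCset n k u p (topSet n k i k) * zConst n k p := mul_le_mul_of_nonneg_left hz hP0
    _ ≤ p i / zConst n k p * zConst n k p := mul_le_mul_of_nonneg_right hP hz0
    _ ≤ p i := by
      rcases hz0.eq_or_lt with h | h
      · rw [← h]
        simp [(hp i).1.le]
      · rw [div_mul_cancel₀ _ h.ne']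
end
end
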